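/- Let H = ⊕_{k≥0} H_k be a graded Hopf algebra over K, i.e. H_k H_l ⊆ H_{k+l} and Δ(H_k) ⊆ ⊕_{r=0}^{k} H_r ⊗ H_{k-r} for all k, l ≥ 0. Then H₀ with the induced operations is a Hopf algebra, and, denoting by i : H₀ → H the inclusion and by π : H → H₀ the projection onto the degree-0 component (which vanishes on H_k for k > 0), the map Π(h) = ∑ h₍₁₎ · i(S₀(π(h₍₂₎))), where S₀ is the antipode of H₀, is an idempotent Rota-Baxter operator of weight -1 on H. -/

import Mathlib

/-!
STATEMENT 9: Let `H = ⊕_{k≥0} H_k` be a graded Hopf algebra. Then `H₀` with the induced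
operations is a Hopf algebra (we express this by: `1 ∈ H₀`, `Δ(H₀) ⊆ H₀ ⊗ H₀`, and there
is an antipode `S₀` for `H₀`), and for the projection `π` onto `H₀` (vanishing on `H_k`,
`k > 0`) and any such antipode `S₀`, the map `Π(h) = ∑ h₍₁₎ i(S₀(π(h₍₂₎)))` is an
idempotent Rota-Baxter operator of weight `-1` on `H`.  All maps are expressed inside `H`
(the inclusion `i : H₀ → H` being implicit), and the antipode property of `S₀` is stated
via the comultiplication and counit of `H` restricted to `H₀`.
-/

open TensorProduct Coalgebra HopfAlgebra LinearMap


open WithConv in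
/-- Radford projection of a bialgebra endomorphism `p` with convolution inverse `s`. -/
theorem radford_aux {K H : Type*} [Field K] [Ring H] [HopfAlgebra K H]
    (p : H →ₐc[K] H) (s : H →ₗ[K] H)
    (hs : toConv s * toConv (p : H →ₗ[K] H) = 1)
    (hsp : ∀ x, s (p x) = s x) (hpp : ∀ x, p (p x) = p x)
    (Pr : H →ₗ[K] H) (hPr : Pr = LinearMap.mul' K H ∘ₗ (s.lTensor H) ∘ₗ Coalgebra.comul) :
    (Pr ∘ₗ Pr = Pr) ∧
    (∀ x y : H, Pr x * Pr y = Pr (x * Pr y) + Pr (Pr x * y) + (-1 : K) • Pr (x * y)) := by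
  -- `s` is also a right inverse, and `s = p ∘ S`
  have hright : toConv (p : H →ₗ[K] H) * toConv ((p : H →ₗ[K] H) ∘ₗ antipode K) = 1 := by
    have h := algHom_comp_convMul_distrib (R := K) (p : H →ₐ[K] H)
      (toConv (LinearMap.id : H →ₗ[K] H)) (toConv (antipode K))
    rw [LinearMap.id_mul_antipode] at h
    apply WithConv.ofConv_injective
    refine Eq.trans h.symm ?_
    ext x
    simpa using AlgHomClass.commutes p (Coalgebra.counit (R := K) x)
  have hsS : s = (p : H →ₗ[K] H) ∘ₗ antipode K :=
    WithConv.toConv_injective (left_inv_eq_right_inv hs hright)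
  have hs' : toConv (p : H →ₗ[K] H) * toConv s = 1 := by rw [hsS]; exact hright
  have hsmul : ∀ x y, s (x * y) = s y * s x := by
    intro x y; simp [hsS, HopfAlgebra.antipode_mul_antidistrib]
  have hsone : s 1 = 1 := by simp [hsS]
  have hPrc : toConv Pr = toConv LinearMap.id * toConv s := by
    rw [hPr]; rfl
  -- the coaction
  let ρ : H →ₐ[K] H ⊗[K] H :=
    (Algebra.TensorProduct.map (AlgHom.id K H) (p : H →ₐ[K] H)).comp (Bialgebra.comulAlgHom K H)
  let j : H →ₐ[K] H ⊗[K] H := Algebra.TensorProduct.includeLeft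
  let k : H →ₐ[K] H ⊗[K] H := Algebra.TensorProduct.includeRight
  have dist : ∀ (φ : H →ₐ[K] H ⊗[K] H) (f g : H →ₗ[K] H),
      toConv (φ.toLinearMap ∘ₗ (toConv f * toConv g).ofConv) =
        toConv (φ.toLinearMap ∘ₗ f) * toConv (φ.toLinearMap ∘ₗ g) := by
    intro φ f g
    exact congrArg toConv (algHom_comp_convMul_distrib (R := K) φ (toConv f) (toConv g))
  have distone : ∀ (φ : H →ₐ[K] H ⊗[K] H),
      toConv (φ.toLinearMap ∘ₗ (1 : WithConv (H →ₗ[K] H)).ofConv) = 1 := by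
    intro φ
    apply WithConv.ofConv_injective
    ext x
    simp [LinearMap.convOne_def]
  have jk : ∀ f g : H →ₗ[K] H,
      toConv (j.toLinearMap ∘ₗ f) * toConv (k.toLinearMap ∘ₗ g) =
        toConv (TensorProduct.map f g ∘ₗ Coalgebra.comul) := by
    intro f g
    rw [LinearMap.convMul_def]
    congr 1
    rw [← LinearMap.comp_assoc]
    congr 1
    ext a b
    simp [j, k]
  have hρ : toConv ρ.toLinearMap =
      toConv j.toLinearMap * toConv (k.toLinearMap ∘ₗ (p : H →ₗ[K] H)) := by
    refine Eq.trans ?_ (jk LinearMap.id (p : H →ₗ[K] H)).symm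
    rfl
  have hρp : toConv (ρ.toLinearMap ∘ₗ (p : H →ₗ[K] H)) =
      toConv (j.toLinearMap ∘ₗ (p : H →ₗ[K] H)) * toConv (k.toLinearMap ∘ₗ (p : H →ₗ[K] H)) := by
    rw [jk]
    congr 1
    have hc : TensorProduct.map (p : H →ₗ[K] H) (p : H →ₗ[K] H) ∘ₗ Coalgebra.comul =
        Coalgebra.comul ∘ₗ (p : H →ₗ[K] H) := CoalgHomClass.map_comp_comul p
    have h1 : ρ.toLinearMap ∘ₗ (p : H →ₗ[K] H) =
        TensorProduct.map LinearMap.id (p : H →ₗ[K] H) ∘ₗ Coalgebra.comul ∘ₗ (p : H →ₗ[K] H) := rfl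
    rw [h1, ← hc, ← LinearMap.comp_assoc, ← TensorProduct.map_comp]
    congr 2
    ext x
    exact hpp x
  have hcoinv : toConv (ρ.toLinearMap ∘ₗ Pr) = toConv (j.toLinearMap ∘ₗ Pr) := by
    have hPr' : Pr = (toConv LinearMap.id * toConv s).ofConv := congrArg ofConv hPrc
    rw [hPr', dist, dist]
    simp only [LinearMap.comp_id]
    have e1 : toConv (j.toLinearMap ∘ₗ s) * toConv (ρ.toLinearMap ∘ₗ (p : H →ₗ[K] H)) =
        toConv (k.toLinearMap ∘ₗ (p : H →ₗ[K] H)) := by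
      rw [hρp, ← mul_assoc, ← dist, hs, distone, one_mul]
    have e2 : toConv (ρ.toLinearMap ∘ₗ (p : H →ₗ[K] H)) * toConv (ρ.toLinearMap ∘ₗ s) = 1 := by
      rw [← dist, hs', distone]
    calc toConv ρ.toLinearMap * toConv (ρ.toLinearMap ∘ₗ s)
        = toConv j.toLinearMap * (toConv (j.toLinearMap ∘ₗ s) *
            toConv (ρ.toLinearMap ∘ₗ (p : H →ₗ[K] H))) * toConv (ρ.toLinearMap ∘ₗ s) := by
          rw [e1, ← hρ]
      _ = toConv j.toLinearMap * toConv (j.toLinearMap ∘ₗ s) := by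
          rw [mul_assoc, mul_assoc, e2, mul_one]
  have hcoinv' : ∀ x, TensorProduct.map LinearMap.id (p : H →ₗ[K] H) (Coalgebra.comul (Pr x)) =
      Pr x ⊗ₜ[K] (1 : H) := by
    intro x
    exact LinearMap.congr_fun (congrArg ofConv hcoinv) x
  -- the twisted multiplication `a ⊗ c ↦ a * w * s c`
  let T : H → (H ⊗[K] H →ₗ[K] H) := fun w =>
    LinearMap.mul' K H ∘ₗ TensorProduct.map (LinearMap.mulRight K w) s
  have hT : ∀ w a c, T w (a ⊗ₜ c) = a * w * s c := by intro w a c; simp [T]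
  have hTp : ∀ w t, T w (TensorProduct.map LinearMap.id (p : H →ₗ[K] H) t) = T w t := by
    intro w t
    induction t with
    | zero => simp
    | add a b ha hb => simp only [map_add, ha, hb]
    | tmul a b => simp [hT, hsp]
  have hPrmul : ∀ x y, Pr (x * y) = T (Pr y) (Coalgebra.comul x) := by
    intro x y
    have key : ∀ t u : H ⊗[K] H, LinearMap.mul' K H (s.lTensor H (t * u)) =
        T (LinearMap.mul' K H (s.lTensor H u)) t := by
      intro t u
      induction t with
      | zero => simp
      | add a b ha hb => simp only [map_add, add_mul, ha, hb]
      | tmul a b =>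
        rw [hT]
        induction u with
        | zero => simp
        | add c d hc hd => simp only [map_add, mul_add, add_mul, hc, hd]
        | tmul c d => simp [hsmul, mul_assoc]
    rw [hPr]
    simp only [LinearMap.comp_apply, Bialgebra.comul_mul]
    exact key _ _
  have hmulL : ∀ x y, Pr (Pr x * y) = Pr x * Pr y := by
    intro x y
    rw [hPrmul, ← hTp, hcoinv', hT, hsone, mul_one]
  have hone : Pr 1 = 1 := by
    rw [hPr]; simp [Algebra.TensorProduct.one_def, hsone]
  have hidem : ∀ x, Pr (Pr x) = Pr x := by
    intro x
    have := hmulL x 1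
    rwa [hone, mul_one] at this
  refine ⟨LinearMap.ext hidem, fun x y => ?_⟩
  have hmulR : Pr (x * Pr y) = Pr (x * y) := by rw [hPrmul, hidem, ← hPrmul]
  rw [hmulL, hmulR, neg_one_smul]
  abel

section Graded

variable {K H : Type*} [Field K] [Ring H] [HopfAlgebra K H] {ℋ : ℕ → Submodule K H}

theorem graded_induction (hinternal : DirectSum.IsInternal ℋ) {M : Type*} [AddCommGroup M]
    [Module K M] {F G : H →ₗ[K] M} (h : ∀ k, ∀ x ∈ ℋ k, F x = G x) (x : H) : F x = G x := by
  have hx : x ∈ ⨆ k, ℋ k := by rw [hinternal.submodule_iSup_eq_top]; trivial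
  have hle : ⨆ k, ℋ k ≤ LinearMap.eqLocus F G := iSup_le fun k y hy => h k y hy
  exact hle hx

theorem graded_comul_eq
    (hcomul : ∀ k : ℕ, ∀ x ∈ ℋ k,
      Coalgebra.comul (R := K) x ∈
        ⨆ r ∈ Finset.range (k + 1),
          LinearMap.range (TensorProduct.mapIncl (ℋ r) (ℋ (k - r))))
    {M : Type*} [AddCommGroup M] [Module K M] {F G : H ⊗[K] H →ₗ[K] M} (k : ℕ)
    (h : ∀ r ≤ k, ∀ a ∈ ℋ r, ∀ b ∈ ℋ (k - r), F (a ⊗ₜ b) = G (a ⊗ₜ b))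
    (x : H) (hx : x ∈ ℋ k) : F (Coalgebra.comul x) = G (Coalgebra.comul x) := by
  have hle : (⨆ r ∈ Finset.range (k + 1),
      LinearMap.range (TensorProduct.mapIncl (ℋ r) (ℋ (k - r)))) ≤ LinearMap.eqLocus F G := by
    refine iSup₂_le fun r hr => ?_
    rintro _ ⟨t, rfl⟩
    rw [LinearMap.mem_eqLocus]
    induction t with
    | zero => simp
    | add a b ha hb => simp only [map_add, ha, hb]
    | tmul a b =>
      exact h r (by simpa [Nat.lt_succ_iff] using hr) a a.2 b b.2
  exact hle (hcomul k x hx)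

theorem exists_graded_proj (hinternal : DirectSum.IsInternal ℋ) :
    ∃ q : ℕ → H →ₗ[K] H, (∀ n x, q n x ∈ ℋ n) ∧ (∀ n, ∀ x ∈ ℋ n, q n x = x) ∧
      (∀ n k, k ≠ n → ∀ x ∈ ℋ k, q n x = 0) := by
  classical
  letI : DirectSum.Decomposition ℋ := hinternal.chooseDecomposition
  refine ⟨fun n => (ℋ n).subtype ∘ₗ DirectSum.component K ℕ (fun i => ℋ i) n ∘ₗ
    (DirectSum.decomposeLinearEquiv ℋ).toLinearMap, fun n x => ?_, fun n x hx => ?_,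
    fun n k hk x hx => ?_⟩
  · exact Submodule.coe_mem _
  · exact DirectSum.decompose_of_mem_same ℋ hx
  · exact DirectSum.decompose_of_mem_ne ℋ hx hk

theorem graded_one_mem (hinternal : DirectSum.IsInternal ℋ)
    (hmul : ∀ k l : ℕ, ∀ x ∈ ℋ k, ∀ y ∈ ℋ l, x * y ∈ ℋ (k + l)) : (1 : H) ∈ ℋ 0 := by
  obtain ⟨q, hq, hq1, hq0⟩ := exists_graded_proj hinternal
  have key : ∀ x, (LinearMap.mulLeft K (q 0 1)) x = (LinearMap.id : H →ₗ[K] H) x := by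
    refine graded_induction hinternal fun k x hx => ?_
    have h2 : ∀ y, (q k ∘ₗ LinearMap.mulRight K x) y = (LinearMap.mulRight K x ∘ₗ q 0) y := by
      refine graded_induction hinternal fun l y hy => ?_
      have hyx := hmul l k y hy x hx
      rcases Nat.eq_zero_or_pos l with rfl | hl
      · rw [zero_add] at hyx
        simp [hq1 _ _ hyx, hq1 _ _ hy]
      · simp [hq0 k (l + k) (by omega) _ hyx, hq0 0 l (by omega) _ hy]
    have h3 := h2 1
    simp only [LinearMap.comp_apply, LinearMap.mulRight_apply, one_mul, hq1 k x hx] at h3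
    simpa using h3.symm
  have h1 := key 1
  simp only [LinearMap.mulLeft_apply, mul_one, LinearMap.id_apply] at h1
  rw [← h1]
  exact hq 0 1

/-- The projection onto degree zero is a bialgebra endomorphism. -/
theorem exists_bialgHom (hinternal : DirectSum.IsInternal ℋ)
    (hmul : ∀ k l : ℕ, ∀ x ∈ ℋ k, ∀ y ∈ ℋ l, x * y ∈ ℋ (k + l))
    (hcomul : ∀ k : ℕ, ∀ x ∈ ℋ k,
      Coalgebra.comul (R := K) x ∈
        ⨆ r ∈ Finset.range (k + 1),
          LinearMap.range (TensorProduct.mapIncl (ℋ r) (ℋ (k - r))))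
    (π : H →ₗ[K] H) (h0 : ∀ x ∈ ℋ 0, π x = x) (hpos : ∀ k : ℕ, 0 < k → ∀ x ∈ ℋ k, π x = 0) :
    ∃ p : H →ₐc[K] H, (p : H →ₗ[K] H) = π := by
  have hone : π 1 = 1 := h0 1 (graded_one_mem hinternal hmul)
  have hπmul : ∀ x y, π (x * y) = π x * π y := by
    intro x y
    have : ∀ x, (π ∘ₗ LinearMap.mulRight K y) x = (LinearMap.mulRight K (π y) ∘ₗ π) x := by
      refine graded_induction hinternal fun k x hx => ?_
      have : ∀ y, (π ∘ₗ LinearMap.mulLeft K x) y = (LinearMap.mulLeft K (π x) ∘ₗ π) y := by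
        refine graded_induction hinternal fun l y hy => ?_
        have hxy := hmul k l x hx y hy
        rcases Nat.eq_zero_or_pos k with rfl | hk
        · rcases Nat.eq_zero_or_pos l with rfl | hl
          · simp [h0 _ hx, h0 _ hy, h0 _ hxy]
          · simp [hpos l hl _ hy, hpos (0 + l) (by omega) _ hxy]
        · simp [hpos k hk _ hx, hpos (k + l) (by omega) _ hxy]
      simpa using this y
    simpa using this x
  have hΔ : ∀ x, (TensorProduct.map π π ∘ₗ Coalgebra.comul) x = (Coalgebra.comul ∘ₗ π) x := by
    refine graded_induction hinternal fun k x hx => ?_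
    simp only [LinearMap.comp_apply]
    rcases Nat.eq_zero_or_pos k with rfl | hk
    · rw [h0 x hx]
      refine graded_comul_eq hcomul (G := LinearMap.id) 0 (fun r hr a ha b hb => ?_) x hx
      obtain rfl : r = 0 := by omega
      simp [h0 a ha, h0 b hb]
    · rw [hpos k hk x hx, map_zero]
      refine graded_comul_eq hcomul (G := 0) k (fun r hr a ha b hb => ?_) x hx
      rcases Nat.eq_zero_or_pos r with rfl | hr'
      · simp [hpos (k - 0) (by omega) b hb]
      · simp [hpos r hr' a ha]
  have hε : ∀ x, (Coalgebra.counit (R := K) ∘ₗ π) x = Coalgebra.counit (R := K) x := by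
    obtain ⟨q, hq, hq1, hq0⟩ := exists_graded_proj hinternal
    -- `ε ∘ π` is a left counit
    have hleft : ∀ x : H, ((TensorProduct.lid K H).toLinearMap ∘ₗ
        (Coalgebra.counit (R := K) ∘ₗ π).rTensor H ∘ₗ Coalgebra.comul) x =
          (LinearMap.id : H →ₗ[K] H) x := by
      refine graded_induction hinternal fun k x hx => ?_
      have h1 := graded_comul_eq hcomul
        (F := (TensorProduct.lid K H).toLinearMap ∘ₗ (Coalgebra.counit (R := K) ∘ₗ π).rTensor H)
        (G := q k ∘ₗ (TensorProduct.lid K H).toLinearMap ∘ₗ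
          (Coalgebra.counit (R := K) (A := H)).rTensor H) k
        (fun r hr a ha b hb => by
          rcases Nat.eq_zero_or_pos r with rfl | hr'
          · simp [h0 a ha, hq1 k b hb]
          · simp [hpos r hr' a ha, hq0 k (k - r) (by omega) b hb]) x hx
      refine Eq.trans h1 ?_
      simp [Coalgebra.rTensor_counit_comul, hq1 k x hx]
    intro x
    have h2 : Coalgebra.counit (R := K) x = Coalgebra.counit (R := K)
        (((TensorProduct.lid K H).toLinearMap ∘ₗ
        (Coalgebra.counit (R := K) ∘ₗ π).rTensor H ∘ₗ Coalgebra.comul) x) := by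
      rw [hleft x]; rfl
    rw [h2]
    have h3 : ∀ t : H ⊗[K] H, Coalgebra.counit (R := K) (TensorProduct.lid K H
        ((Coalgebra.counit (R := K) ∘ₗ π).rTensor H t)) =
        (Coalgebra.counit (R := K) ∘ₗ π) (TensorProduct.rid K H
        ((Coalgebra.counit (R := K) (A := H)).lTensor H t)) := by
      intro t
      induction t with
      | zero => simp
      | add a b ha hb => simp only [map_add, ha, hb]
      | tmul a b => simp [mul_comm]
    refine Eq.trans ?_ (h3 (Coalgebra.comul x)).symm
    simp [Coalgebra.lTensor_counit_comul]
  exact ⟨BialgHom.ofAlgHom (AlgHom.ofLinearMap π hone hπmul)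
    (by ext x; exact hε x) (by ext x; exact hΔ x), rfl⟩

end Graded

theorem gradedHopfAlgebra_degreeZero_projection_isRotaBaxter
    (K : Type*) [Field K] [CharZero K]
    (H : Type*) [Ring H] [HopfAlgebra K H]
    (ℋ : ℕ → Submodule K H)
    -- H = ⊕_{k ≥ 0} H_k as K-vector spaces
    (hinternal : DirectSum.IsInternal ℋ)
    -- H_k H_l ⊆ H_{k+l}
    (hmul : ∀ k l : ℕ, ∀ x ∈ ℋ k, ∀ y ∈ ℋ l, x * y ∈ ℋ (k + l))
    -- Δ(H_k) ⊆ ⊕_{r=0}^{k} H_r ⊗ H_{k-r}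
    (hcomul : ∀ k : ℕ, ∀ x ∈ ℋ k,
      Coalgebra.comul (R := K) x ∈
        ⨆ r ∈ Finset.range (k + 1),
          LinearMap.range (TensorProduct.mapIncl (ℋ r) (ℋ (k - r)))) :
    -- H₀ is a Hopf algebra with the induced operations:
    ((1 : H) ∈ ℋ 0) ∧
    (∀ x ∈ ℋ 0, Coalgebra.comul (R := K) x ∈
        LinearMap.range (TensorProduct.mapIncl (ℋ 0) (ℋ 0))) ∧
    (∃ S₀ : H →ₗ[K] H,
      (∀ x ∈ ℋ 0, S₀ x ∈ ℋ 0) ∧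
      (∀ x ∈ ℋ 0,
        LinearMap.mul' K H ((S₀.rTensor H) (Coalgebra.comul x)) =
          algebraMap K H (Coalgebra.counit x) ∧
        LinearMap.mul' K H ((S₀.lTensor H) (Coalgebra.comul x)) =
          algebraMap K H (Coalgebra.counit x))) ∧
    -- and for the projection π onto H₀ and any antipode S₀ of H₀,
    -- Π = id ⋆ (i ∘ S₀ ∘ π) is an idempotent Rota-Baxter operator of weight -1
    (∀ π : H →ₗ[K] H,
      (∀ x ∈ ℋ 0, π x = x) →
      (∀ k : ℕ, 0 < k → ∀ x ∈ ℋ k, π x = 0) →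
      ∀ S₀ : H →ₗ[K] H,
        (∀ x ∈ ℋ 0, S₀ x ∈ ℋ 0) →
        (∀ x ∈ ℋ 0,
          LinearMap.mul' K H ((S₀.rTensor H) (Coalgebra.comul x)) =
            algebraMap K H (Coalgebra.counit x) ∧
          LinearMap.mul' K H ((S₀.lTensor H) (Coalgebra.comul x)) =
            algebraMap K H (Coalgebra.counit x)) →
        let Pr : H →ₗ[K] H :=
          LinearMap.mul' K H ∘ₗ ((S₀ ∘ₗ π).lTensor H) ∘ₗ Coalgebra.comul
        (Pr ∘ₗ Pr = Pr) ∧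
        (∀ x y : H,
          Pr x * Pr y = Pr (x * Pr y) + Pr (Pr x * y) + (-1 : K) • Pr (x * y))) := by
  
  have hone := graded_one_mem hinternal hmul
  have hΔ0 : ∀ x ∈ ℋ 0, Coalgebra.comul (R := K) x ∈
        LinearMap.range (TensorProduct.mapIncl (ℋ 0) (ℋ 0)) := by
    intro x hx
    simpa using hcomul 0 x hx
  refine ⟨hone, hΔ0, ?_, ?_⟩
  · obtain ⟨q, hq, hq1, hq0⟩ := exists_graded_proj hinternal
    obtain ⟨p, hp⟩ := exists_bialgHom hinternal hmul hcomul (q 0) (hq1 0)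
      (fun k hk x hx => hq0 0 k (by omega) x hx)
    have hpx : ∀ x, q 0 x = p x := fun x => (LinearMap.congr_fun hp x).symm
    have hp0 : ∀ x ∈ ℋ 0, p x = x := fun x hx => by rw [← hpx, hq1 0 x hx]
    refine ⟨q 0 ∘ₗ antipode K, fun x _ => hq 0 _, fun x hx => ⟨?_, ?_⟩⟩
    · have h1 := graded_comul_eq hcomul
        (F := LinearMap.mul' K H ∘ₗ (q 0 ∘ₗ antipode K).rTensor H)
        (G := q 0 ∘ₗ LinearMap.mul' K H ∘ₗ (antipode K).rTensor H) 0
        (fun r hr a ha b hb => by simp [hpx, hp0 b (by simpa using hb)]) x hx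
      refine Eq.trans h1 ?_
      simpa [hpx] using AlgHomClass.commutes p (Coalgebra.counit (R := K) x)
    · have h1 := graded_comul_eq hcomul
        (F := LinearMap.mul' K H ∘ₗ (q 0 ∘ₗ antipode K).lTensor H)
        (G := q 0 ∘ₗ LinearMap.mul' K H ∘ₗ (antipode K).lTensor H) 0
        (fun r hr a ha b hb => by
          obtain rfl : r = 0 := by omega
          simp [hpx, hp0 a ha]) x hx
      refine Eq.trans h1 ?_
      simpa [hpx] using AlgHomClass.commutes p (Coalgebra.counit (R := K) x)
  · intro π hπ0 hπpos S₀ hS₀ hanti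
    obtain ⟨p, hp⟩ := exists_bialgHom hinternal hmul hcomul π hπ0 hπpos
    have hmem : ∀ x, π x ∈ ℋ 0 := by
      obtain ⟨q, hq, hq1, hq0⟩ := exists_graded_proj hinternal
      intro x
      have : π x = q 0 x := graded_induction hinternal (fun k x hx => by
        rcases Nat.eq_zero_or_pos k with rfl | hk
        · rw [hπ0 x hx, hq1 0 x hx]
        · rw [hπpos k hk x hx, hq0 0 k (by omega) x hx]) x
      rw [this]; exact hq 0 x
    have hpx : ∀ x, p x = π x := fun x => LinearMap.congr_fun hp x
    have hidem : ∀ x, π (π x) = π x := fun x => hπ0 _ (hmem x)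
    refine radford_aux p (S₀ ∘ₗ π) ?_ (fun x => ?_) (fun x => ?_) _ rfl
    · apply WithConv.ofConv_injective
      ext x
      have hc : TensorProduct.map (p : H →ₗ[K] H) (p : H →ₗ[K] H) (Coalgebra.comul x) =
        Coalgebra.comul (p x) := LinearMap.congr_fun (CoalgHomClass.map_comp_comul p) x
      have hε : Coalgebra.counit (R := K) (p x) = Coalgebra.counit (R := K) x :=
        LinearMap.congr_fun (CoalgHomClass.counit_comp p) x
      have h1 := (hanti (p x) (by rw [hpx]; exact hmem x)).1
      rw [hε, ← hc] at h1
      refine Eq.trans ?_ h1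
      rw [hp]
      change LinearMap.mul' K H (TensorProduct.map (S₀ ∘ₗ π) π (Coalgebra.comul x)) = _
      congr 1
      rw [← LinearMap.comp_apply (LinearMap.rTensor H S₀), LinearMap.rTensor_comp_map]
    · simp [hpx, hidem]
    · simp [hpx, hidem]
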